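/- arXiv:2409.19384 — 2 statements merged into one kernel-verified Lean document; each statement's English description precedes it below -/
import Mathlib

section
/- The isotropic reduction satisfies a symmetric Third Isomorphism Theorem: if (M, ψ) is a symmetric bilinear (or symplectic) form on a finite dimensional vector space and V ⊆ U ⊆ M with U isotropic (hence V isotropic), then there is a canonical isometry (M ∕∕ U) ≅ ((M ∕∕ V) ∕∕ (U/V)), where M ∕∕ U := U^⊥ / U with the induced form. -/
open LinearMap (BilinForm)

section QuotForm

variable {K : Type*} [Field K] {N : Type*} [AddCommGroup N] [Module K N]

/-- The bilinear form induced on a quotient `N ⧸ T` by a bilinear form `B` on `N` whose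
left and right radicals contain `T`. -/
noncomputable def quotBilin (B : BilinForm K N) (T : Submodule K N)
    (hl : ∀ t ∈ T, B t = 0) (hr : ∀ t ∈ T, ∀ x : N, B x t = 0) :
    BilinForm K (N ⧸ T) :=
  Submodule.liftQ T
    { toFun := fun x => Submodule.liftQ T (B x) (by
        intro t ht
        simp [LinearMap.mem_ker, hr t ht x])
      map_add' := by
        intro x y
        refine LinearMap.ext fun z => ?_
        obtain ⟨w, rfl⟩ := Submodule.Quotient.mk_surjective T z
        simp
      map_smul' := by
        intro c x
        refine LinearMap.ext fun z => ?_
        obtain ⟨w, rfl⟩ := Submodule.Quotient.mk_surjective T z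
        simp }
    (by
      intro t ht
      simp only [LinearMap.mem_ker]
      refine LinearMap.ext fun z => ?_
      obtain ⟨w, rfl⟩ := Submodule.Quotient.mk_surjective T z
      simp [hl t ht])

end QuotForm

section

variable {K : Type*} [Field K] {M : Type*} [AddCommGroup M] [Module K M]
  [FiniteDimensional K M]

/-- The copy of a submodule `W ≤ O` inside `↥O`. -/
def inside (O W : Submodule K M) : Submodule K ↥O := W.comap O.subtype

/-- The underlying space of the isotropic reduction `M ∕∕ W = W^⊥ / W`. -/
abbrev IsotropicRed (ψ : BilinForm K M) (W : Submodule K M) :=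
  ↥(ψ.orthogonal W) ⧸ inside (ψ.orthogonal W) W

/-- The induced form on the isotropic reduction `M ∕∕ W`. -/
noncomputable def redForm (ψ : BilinForm K M) (W : Submodule K M)
    (hl : ∀ t ∈ inside (ψ.orthogonal W) W, (ψ.restrict (ψ.orthogonal W)) t = 0)
    (hr : ∀ t ∈ inside (ψ.orthogonal W) W, ∀ x, (ψ.restrict (ψ.orthogonal W)) x t = 0) :
    BilinForm K (IsotropicRed ψ W) :=
  quotBilin (ψ.restrict (ψ.orthogonal W)) (inside (ψ.orthogonal W) W) hl hr

end

/-- The symmetric Third Isomorphism Theorem for isotropic reductions: for a reflexive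
nondegenerate bilinear form `ψ` on a finite dimensional space `M` and isotropic subspaces
`V ⊆ U ⊆ M`, there is a canonical isometry `(M ∕∕ U) ≅ ((M ∕∕ V) ∕∕ (U/V))`, where
`M ∕∕ W := W^⊥/W` carries the induced form, and `U/V` denotes the image of `U` in
`M ∕∕ V`, an isotropic subspace for the induced form.  (The radical conditions needed to
descend the forms to the quotients, which are automatic, are supplied as hypotheses.) -/
theorem isotropic_reduction_third_iso
    {K : Type*} [Field K] {M : Type*} [AddCommGroup M] [Module K M]
    [FiniteDimensional K M]
    (ψ : LinearMap.BilinForm K M) (href : ψ.IsRefl) (hnd : ψ.Nondegenerate)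
    (V U : Submodule K M) (hVU : V ≤ U)
    (hU : ∀ x ∈ U, ∀ y ∈ U, ψ x y = 0)
    -- radical conditions for the reduction M ∕∕ U
    (hl₁ : ∀ t ∈ inside (ψ.orthogonal U) U, (ψ.restrict (ψ.orthogonal U)) t = 0)
    (hr₁ : ∀ t ∈ inside (ψ.orthogonal U) U, ∀ x, (ψ.restrict (ψ.orthogonal U)) x t = 0)
    -- radical conditions for the reduction M ∕∕ V
    (hl₂ : ∀ t ∈ inside (ψ.orthogonal V) V, (ψ.restrict (ψ.orthogonal V)) t = 0)
    (hr₂ : ∀ t ∈ inside (ψ.orthogonal V) V, ∀ x, (ψ.restrict (ψ.orthogonal V)) x t = 0)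
    -- the image Ū = U/V of U in M ∕∕ V
    (Ubar : Submodule K (IsotropicRed ψ V))
    (hUbar : Ubar = (inside (ψ.orthogonal V) U).map
        (inside (ψ.orthogonal V) V).mkQ)
    -- radical conditions for the second reduction (M ∕∕ V) ∕∕ Ū
    (hl₃ : ∀ t ∈ inside ((redForm ψ V hl₂ hr₂).orthogonal Ubar) Ubar,
        ((redForm ψ V hl₂ hr₂).restrict ((redForm ψ V hl₂ hr₂).orthogonal Ubar)) t = 0)
    (hr₃ : ∀ t ∈ inside ((redForm ψ V hl₂ hr₂).orthogonal Ubar) Ubar,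
        ∀ x, ((redForm ψ V hl₂ hr₂).restrict
          ((redForm ψ V hl₂ hr₂).orthogonal Ubar)) x t = 0) :
    ∃ e : IsotropicRed ψ U ≃ₗ[K] IsotropicRed (redForm ψ V hl₂ hr₂) Ubar,
      ∀ a b : IsotropicRed ψ U,
        redForm (redForm ψ V hl₂ hr₂) Ubar hl₃ hr₃ (e a) (e b)
          = redForm ψ U hl₁ hr₁ a b := by
  have hle : ψ.orthogonal U ≤ ψ.orthogonal V := fun x hx n hn => hx n (hVU hn)
  have hUV : U ≤ ψ.orthogonal V := fun x hx n hn => hU n (hVU hn) x hx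
  have key : ∀ x y : ↥(ψ.orthogonal V),
      redForm ψ V hl₂ hr₂ ((inside (ψ.orthogonal V) V).mkQ x)
        ((inside (ψ.orthogonal V) V).mkQ y) = ψ x y := fun x y => rfl
  -- membership in the orthogonal of `Ubar`
  have horth : ∀ x : ↥(ψ.orthogonal V),
      (inside (ψ.orthogonal V) V).mkQ x ∈ (redForm ψ V hl₂ hr₂).orthogonal Ubar ↔
        (x : M) ∈ ψ.orthogonal U := by
    intro x
    constructor
    · intro h n hn
      have h1 := h ((inside (ψ.orthogonal V) V).mkQ ⟨n, hUV hn⟩)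
        (by rw [hUbar]; exact Submodule.mem_map_of_mem hn)
      exact h1
    · intro h n hn
      rw [hUbar] at hn
      obtain ⟨u, hu, rfl⟩ := hn
      exact h u hu
  -- membership in `Ubar`
  have hmem : ∀ x : ↥(ψ.orthogonal V),
      (inside (ψ.orthogonal V) V).mkQ x ∈ Ubar ↔ (x : M) ∈ U := by
    intro x
    rw [hUbar]
    constructor
    · rintro ⟨u, hu, hux⟩
      have h1 : u - x ∈ inside (ψ.orthogonal V) V := (Submodule.Quotient.eq _).1 hux
      have h2 : (u : M) - x ∈ U := hVU h1
      have h3 : (u : M) ∈ U := hu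
      exact (Submodule.sub_mem_iff_right U h3).1 h2
    · intro h
      exact Submodule.mem_map_of_mem h
  let g : ↥(ψ.orthogonal U) →ₗ[K] ↥((redForm ψ V hl₂ hr₂).orthogonal Ubar) :=
    LinearMap.codRestrict _
      ((inside (ψ.orthogonal V) V).mkQ.comp (Submodule.inclusion hle))
      (fun x => (horth (Submodule.inclusion hle x)).2 x.2)
  let f : ↥(ψ.orthogonal U) →ₗ[K] IsotropicRed (redForm ψ V hl₂ hr₂) Ubar :=
    (inside ((redForm ψ V hl₂ hr₂).orthogonal Ubar) Ubar).mkQ.comp g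
  have hker : inside (ψ.orthogonal U) U = LinearMap.ker f := by
    ext x
    rw [LinearMap.mem_ker]
    refine Iff.trans ?_ (Submodule.Quotient.mk_eq_zero _).symm
    exact (hmem (Submodule.inclusion hle x)).symm
  have hsurj : Function.Surjective f := by
    intro z
    obtain ⟨⟨y, hy⟩, rfl⟩ := Submodule.Quotient.mk_surjective _ z
    obtain ⟨x, rfl⟩ := Submodule.Quotient.mk_surjective _ y
    exact ⟨⟨x, (horth x).1 hy⟩, rfl⟩
  refine ⟨(Submodule.quotEquivOfEq _ _ hker).trans (f.quotKerEquivOfSurjective hsurj), ?_⟩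
  intro a b
  obtain ⟨x, rfl⟩ := Submodule.Quotient.mk_surjective _ a
  obtain ⟨y, rfl⟩ := Submodule.Quotient.mk_surjective _ b
  rfl
end

section
/- Homotopy cardinality of a 1-type is multiplicative over fibrations in the groupoid sense: if f : X → Y is a map of finite groupoids (finitely many objects up to iso, finite automorphism groups) with all homotopy fibers equivalent to a fixed finite groupoid F, then ‖X‖ = ‖F‖ · ‖Y‖, where ‖G‖ = Σ_{x ∈ π_0 G} 1/|Aut(x)|. -/
open CategoryTheory

/-- The groupoid cardinality `‖G‖ = Σ_{[x] ∈ π₀(G)} 1/|Aut(x)|`, written as a sum over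
all objects: each object `x` contributes `1/(#{y : y ≅ x} · |Aut(x)|)`. -/
noncomputable def gcard (G : Type*) [Category G] : ℚ :=
  ∑ᶠ x : G,
    1 / ((Nat.card {y : G // Nonempty (x ≅ y)} : ℚ) * (Nat.card (x ≅ x) : ℚ))

theorem gcard_den {G : Type*} [Category G] (x : G) :
    Nat.card {y : G // Nonempty (x ≅ y)} * Nat.card (x ≅ x) = Nat.card (Σ y : G, (x ≅ y)) := by
  rw [← Nat.card_prod]
  refine Nat.card_congr
    { toFun := fun p => ⟨p.1.1, p.2 ≪≫ p.1.2.some⟩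
      invFun := fun q => ⟨⟨q.1, ⟨q.2⟩⟩, q.2 ≪≫ (Nonempty.some ⟨q.2⟩ : x ≅ q.1).symm⟩
      left_inv := ?_
      right_inv := ?_ }
  · rintro ⟨⟨y, hy⟩, e⟩
    simp
  · rintro ⟨y, e⟩
    simp

theorem gcard_eq {G : Type*} [Category G] :
    gcard G = ∑ᶠ x : G, 1 / (Nat.card (Σ y : G, (x ≅ y)) : ℚ) := by
  unfold gcard
  refine finsum_congr fun x => ?_
  rw [← gcard_den]
  push_cast
  rfl

theorem gcard_groupoid {G : Type*} [Groupoid G] :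
    gcard G = ∑ᶠ x : G, 1 / (Nat.card (Σ y : G, (x ⟶ y)) : ℚ) := by
  rw [gcard_eq]
  refine finsum_congr fun x => ?_
  rw [Nat.card_congr (Equiv.sigmaCongrRight fun y => Groupoid.isoEquivHom x y)]

theorem card_out_comma {X Y : Type*} [Groupoid X] [Groupoid Y] (F : X ⥤ Y) (y : Y)
    (p : Comma F (Functor.fromPUnit y)) :
    Nat.card (Σ q, (p ≅ q)) = Nat.card (Σ x' : X, (p.left ⟶ x')) := by
  symm
  refine Nat.card_congr
    { toFun := fun g => ⟨⟨g.1, ⟨⟨⟩⟩, F.map (Groupoid.inv g.2) ≫ p.hom⟩,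
        Comma.isoMk ((Groupoid.isoEquivHom _ _).symm g.2) (eqToIso (Subsingleton.elim _ _)) ?_⟩
      invFun := fun q => ⟨q.1.left, q.2.hom.left⟩
      left_inv := ?_
      right_inv := ?_ }
  · simp
  · rintro ⟨x', g⟩
    rfl
  · rintro ⟨⟨x', ⟨⟨⟩⟩, ψ⟩, e⟩
    obtain ⟨g, hg⟩ : ∃ g : p.left ⟶ x', e.hom.left = g := ⟨_, rfl⟩
    have h : ψ = F.map (Groupoid.inv g) ≫ p.hom := by
      have := e.hom.w
      simp only [Functor.const_obj_map, Functor.fromPUnit] at this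
      have h2 : F.map e.hom.left ≫ ψ = p.hom := by simpa using this
      rw [← h2, ← hg, ← Functor.map_comp_assoc]
      simp
    subst h
    dsimp only
    rw [hg]
    congr 1
    ext
    · exact hg.symm
    · exact Subsingleton.elim _ _

theorem card_out_congr {Y : Type*} [Groupoid Y] {a b : Y} (f : a ⟶ b) :
    Nat.card (Σ y : Y, (a ⟶ y)) = Nat.card (Σ y : Y, (b ⟶ y)) := by
  refine Nat.card_congr (Equiv.sigmaCongrRight fun y =>
    { toFun := fun g => Groupoid.inv f ≫ g
      invFun := fun g => f ≫ g
      left_inv := fun g => by simp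
      right_inv := fun g => by simp })

def commaEquivSigma {X Y : Type*} [Groupoid X] [Groupoid Y] (F : X ⥤ Y) (y : Y) :
    Comma F (Functor.fromPUnit y) ≃ Σ x : X, (F.obj x ⟶ y) where
  toFun p := ⟨p.left, p.hom⟩
  invFun q := ⟨q.1, ⟨⟨⟩⟩, q.2⟩
  left_inv := fun _ => rfl
  right_inv := fun _ => rfl

theorem gcard_comma {X Y : Type*} [Groupoid X] [Groupoid Y]
    [Fintype X] [∀ a b : Y, Finite (a ⟶ b)] (F : X ⥤ Y) (y : Y) :
    gcard (Comma F (Functor.fromPUnit y)) =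
      ∑ x : X, (Nat.card (F.obj x ⟶ y) : ℚ) * (1 / (Nat.card (Σ x' : X, (x ⟶ x')) : ℚ)) := by
  have := fun x => Fintype.ofFinite (F.obj x ⟶ y)
  rw [gcard_eq, finsum_congr fun p => by rw [card_out_comma],
    ← finsum_comp_equiv (commaEquivSigma F y).symm, finsum_eq_sum_of_fintype, Fintype.sum_sigma]
  refine Finset.sum_congr rfl fun x _ => ?_
  simp [commaEquivSigma]

/-- Homotopy cardinality is multiplicative over fibrations of finite groupoids: if
`F : X ⥤ Y` is a functor of finite groupoids all of whose homotopy fibers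
(the comma groupoids over objects `y : Y`) have cardinality `c`, then `‖X‖ = c·‖Y‖`. -/
theorem gcard_fibration {X Y : Type*} [Groupoid X] [Groupoid Y]
    [Finite X] [Finite Y] [∀ a b : X, Finite (a ⟶ b)] [∀ a b : Y, Finite (a ⟶ b)]
    (F : X ⥤ Y) (c : ℚ)
    (hfib : ∀ y : Y, gcard (Comma F (Functor.fromPUnit y)) = c) :
    gcard X = c * gcard Y := by
  have := Fintype.ofFinite X
  have := Fintype.ofFinite Y
  rw [gcard_groupoid, gcard_groupoid, finsum_eq_sum_of_fintype, finsum_eq_sum_of_fintype,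
    Finset.mul_sum]
  have h1 : ∀ y : Y, c * (1 / (Nat.card (Σ y' : Y, (y ⟶ y')) : ℚ)) =
      ∑ x : X, (1 / (Nat.card (Σ x' : X, (x ⟶ x')) : ℚ)) *
        ((Nat.card (F.obj x ⟶ y) : ℚ) / (Nat.card (Σ y' : Y, (F.obj x ⟶ y')) : ℚ)) := by
    intro y
    rw [← hfib y, gcard_comma, Finset.sum_mul]
    refine Finset.sum_congr rfl fun x _ => ?_
    rcases isEmpty_or_nonempty (F.obj x ⟶ y) with h | ⟨⟨f⟩⟩
    · simp
    · rw [card_out_congr f]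
      ring
  rw [Finset.sum_congr rfl fun y _ => h1 y, Finset.sum_comm]
  refine Finset.sum_congr rfl fun x _ => ?_
  rw [← Finset.mul_sum, ← Finset.sum_div, ← Nat.cast_sum, ← Nat.card_sigma, div_self, mul_one]
  have : Nonempty (Σ y' : Y, (F.obj x ⟶ y')) := ⟨⟨_, 𝟙 _⟩⟩
  exact_mod_cast Nat.card_pos.ne'
end
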